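/- Let α ∈ (0,1), let (ξ,η) be real numbers with −1 < ξ < 1, −1 < η < 1 and −1 < η−ξ < 1. Then there exists at most one complex number ζ with Im ζ > 0 such that M(ζ) = 0; that is, the set of solutions of the saddle point equation lying in the open upper half-plane has at most one element. -/

import Mathlib

open Complex

noncomputable def cc (α : ℝ) : ℝ := Real.sqrt (α / (1 - α + α ^ 2))
noncomputable def r1 (α : ℝ) : ℝ := -Real.sqrt α
noncomputable def r2 (α : ℝ) : ℝ := Real.sqrt α * (α * cc α + Real.sqrt α) / (cc α + Real.sqrt α)
noncomputable def r3 (α : ℝ) : ℝ := Real.sqrt α * (cc α + Real.sqrt α) / (α * cc α + Real.sqrt α)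
noncomputable def rp (α : ℝ) : ℂ :=
  (cc α : ℂ) * ((1 + (α : ℂ)) / 2 + Complex.I * (Real.sqrt 3 : ℂ) * ((1 - (α : ℂ)) / 2))
noncomputable def rm (α : ℝ) : ℂ :=
  (cc α : ℂ) * ((1 + (α : ℂ)) / 2 - Complex.I * (Real.sqrt 3 : ℂ) * ((1 - (α : ℂ)) / 2))
noncomputable def R0 (α : ℝ) : ℝ := Real.sqrt α
noncomputable def Ra (α : ℝ) : ℝ := (1 - α) * Real.sqrt α
noncomputable def R1 (α : ℝ) : ℝ := (1 - α) / Real.sqrt α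

/-- The saddle point polynomial `M` from equation (4.1) of the paper. -/
noncomputable def Msad (α ξ η : ℝ) (ζ : ℂ) : ℂ :=
  (ζ - (r1 α : ℂ)) ^ 2 * (ζ - (r2 α : ℂ)) ^ 2 * (ζ - (r3 α : ℂ)) ^ 2 * (ζ - rp α) * (ζ - rm α)
  - ((ζ - 1) * (ζ + 1) * (ζ - (α : ℂ) * (cc α : ℂ)) * (ζ - (α : ℂ) / (cc α : ℂ)) * (η : ℂ)
     - (ζ - (α : ℂ)) * (ζ + (α : ℂ)) * (ζ - (cc α : ℂ)) * (ζ - 1 / (cc α : ℂ)) * (ξ : ℂ)) ^ 2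


open Polynomial ComplexConjugate Topology

/-!
Write `M = Q - (η A - ξ B) ^ 2`, where `Q` is a real polynomial with double roots at
`r₁ < 0 < r₂ < r₃`. At each of these, `M = -(η A - ξ B) ^ 2 ≤ 0`. On the other hand `M > 0`
* at `0` and near `-∞`, where `A` and `B` agree and `M` behaves like `(1 - (η - ξ) ^ 2) Q`;
* at the roots `α c` and `α / c` of `A`, where `Q = B ^ 2` and so `M = (1 - ξ ^ 2) Q`;
* at the roots `c` and `1 / c` of `B`, where `Q = A ^ 2` and so `M = (1 - η ^ 2) Q`.

These points bracket `r₁`, `r₂` and `r₃` in three disjoint intervals, each of which therefore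
contains two roots of `M`. As `M` has degree at most `8`, only one pair of conjugate roots is left.

The involution `x ↦ α / x` fixes `Q`, exchanges `A` and `B` up to sign (all up to a power of
`α / x ^ 2`), and hence exchanges `ξ` and `η` in `M`. It turns the claims at `0`, `α c`, `α / c`
into those near `-∞` and at `1 / c`, `c`.
-/

section RootCount

lemma card_roots_add_two_mul_card_le_natDegree {P : ℝ[X]} (hP : P ≠ 0) (T : Finset ℂ)
    (hT : ∀ z ∈ T, 0 < z.im ∧ aeval z P = 0) :
    P.roots.card + 2 * T.card ≤ P.natDegree := by
  classical
  have hconj : Disjoint T (T.image conj) := by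
    refine Finset.disjoint_left.2 fun z hz hz' ↦ ?_
    obtain ⟨w, hw, rfl⟩ := Finset.mem_image.1 hz'
    have hneg : 0 < -w.im := (hT _ hz).1
    linarith [(hT w hw).1]
  have hreal : P.roots.map (algebraMap ℝ ℂ) ≤ P.aroots ℂ :=
    map_roots_le_of_injective P (algebraMap ℝ ℂ).injective
  have hnonreal : (T ∪ T.image conj).val ≤ P.aroots ℂ := by
    refine Finset.val_le_iff_val_subset.2 fun z hz ↦ mem_aroots.2 ⟨hP, ?_⟩
    rcases Finset.mem_union.1 hz with hz | hz
    · exact (hT z hz).2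
    · obtain ⟨w, hw, rfl⟩ := Finset.mem_image.1 hz
      rw [aeval_conj, (hT w hw).2, map_zero]
  have hdisj : Disjoint (P.roots.map (algebraMap ℝ ℂ)) (T ∪ T.image conj).val := by
    refine Multiset.disjoint_left.2 fun {z} hz hz' ↦ ?_
    obtain ⟨x, -, rfl⟩ := Multiset.mem_map.1 hz
    rcases Finset.mem_union.1 hz' with hx | hx
    · simpa using (hT _ hx).1
    · obtain ⟨w, hw, hwx⟩ := Finset.mem_image.1 hx
      have him : w.im = 0 := by simpa using congrArg im hwx
      exact (hT w hw).1.ne' him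
  calc P.roots.card + 2 * T.card
      = (P.roots.map (algebraMap ℝ ℂ) + (T ∪ T.image conj).val).card := by
        rw [Multiset.card_add, Multiset.card_map, Finset.card_val,
          Finset.card_union_of_disjoint hconj,
          Finset.card_image_of_injective _ (starRingEnd ℂ).injective, two_mul]
    _ ≤ (P.aroots ℂ).card := by
        rw [Multiset.add_eq_union_iff_disjoint.2 hdisj]
        exact Multiset.card_le_card (Multiset.union_le hreal hnonreal)
    _ ≤ P.natDegree := by
        simpa using card_roots' (P.map (algebraMap ℝ ℂ))

lemma subsingleton_upper_roots_of_natDegree_lt {P : ℝ[X]} (hP : P ≠ 0)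
    (hdeg : P.natDegree < P.roots.card + 4) : {z : ℂ | 0 < z.im ∧ aeval z P = 0}.Subsingleton := by
  intro z hz w hw
  by_contra hzw
  have := card_roots_add_two_mul_card_le_natDegree hP {z, w} (by simpa using And.intro hz hw)
  rw [Finset.card_pair hzw] at this
  omega

lemma two_le_countP_roots_Ioo {P : ℝ[X]} {a r b : ℝ} (har : a < r) (hrb : r < b)
    (ha : 0 < P.eval a) (hr : P.eval r ≤ 0) (hb : 0 < P.eval b) :
    2 ≤ P.roots.countP (· ∈ Set.Ioo a b) := by
  have hP : P ≠ 0 := by rintro rfl; simp at ha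
  suffices ∃ x ∈ Set.Ioo a b, ∃ y ∈ Set.Ioo a b, {x, y} ≤ P.roots by
    obtain ⟨x, hx, y, hy, hxy⟩ := this
    have hpair : ({x, y} : Multiset ℝ).countP (· ∈ Set.Ioo a b) = 2 :=
      Multiset.countP_eq_card.2 (by
        rintro z hz
        rcases Multiset.mem_cons.1 hz with rfl | hz
        exacts [hx, Multiset.mem_singleton.1 hz ▸ hy])
    exact hpair ▸ Multiset.countP_le_of_le _ hxy
  rcases hr.lt_or_eq with hneg | hzero
  · obtain ⟨x, ⟨hax, hxr⟩, hx⟩ := intermediate_value_Ioo' har.le P.continuousOn ⟨hneg, ha⟩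
    obtain ⟨y, ⟨hry, hyb⟩, hy⟩ := intermediate_value_Ioo hrb.le P.continuousOn ⟨hneg, hb⟩
    refine ⟨x, ⟨hax, hxr.trans hrb⟩, y, ⟨har.trans hry, hyb⟩, ?_⟩
    rw [Multiset.le_iff_subset (by simpa using (hxr.trans hry).ne)]
    intro z hz
    rcases Multiset.mem_cons.1 hz with rfl | hz
    · exact (mem_roots hP).2 hx
    · rw [Multiset.mem_singleton.1 hz]
      exact (mem_roots hP).2 hy
  · obtain ⟨R, rfl⟩ := dvd_iff_isRoot.2 hzero
    rw [eval_mul, eval_sub, eval_X, eval_C] at ha hb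
    have hRa : R.eval a < 0 := neg_of_mul_pos_right ha (sub_neg.2 har).le
    have hRb : 0 < R.eval b := pos_of_mul_pos_right hb (sub_pos.2 hrb).le
    obtain ⟨x, hx, hRx⟩ := intermediate_value_Ioo (har.trans hrb).le R.continuousOn ⟨hRa, hRb⟩
    refine ⟨r, ⟨har, hrb⟩, x, hx, ?_⟩
    rw [roots_mul hP, roots_X_sub_C, Multiset.insert_eq_cons, ← Multiset.singleton_add]
    gcongr
    exact Multiset.singleton_le.2 ((mem_roots (right_ne_zero_of_mul hP)).2 hRx)

lemma countP_Ioo_add_countP_Ioo_le {β : Type*} [LinearOrder β] (s : Multiset β) {a b c d : β}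
    (hab : a ≤ b) (hbc : b ≤ c) (hcd : c ≤ d) :
    s.countP (· ∈ Set.Ioo a b) + s.countP (· ∈ Set.Ioo c d) ≤ s.countP (· ∈ Set.Ioo a d) := by
  induction s using Multiset.induction_on with
  | empty => simp
  | cons x s ih =>
    simp only [Multiset.countP_cons, Set.mem_Ioo] at ih ⊢
    split_ifs <;> grind

end RootCount

section Parameters

variable {α : ℝ}

lemma one_sub_add_sq_pos (α : ℝ) : 0 < 1 - α + α ^ 2 := by nlinarith [sq_nonneg (α - 1 / 2)]

lemma cc_pos (hα : 0 < α) : 0 < cc α := Real.sqrt_pos.2 (div_pos hα (one_sub_add_sq_pos α))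

lemma cc_sq_mul (hα : 0 ≤ α) : cc α ^ 2 * (1 - α + α ^ 2) = α := by
  rw [cc, Real.sq_sqrt (div_nonneg hα (one_sub_add_sq_pos α).le),
    div_mul_cancel₀ _ (one_sub_add_sq_pos α).ne']

lemma cc_lt_one (hα1 : α ≠ 1) : cc α < 1 := by
  have : 0 < (α - 1) ^ 2 := sq_pos_of_ne_zero (sub_ne_zero.2 hα1)
  rw [cc, Real.sqrt_lt' one_pos, div_lt_iff₀ (one_sub_add_sq_pos α)]
  linarith

lemma one_sub_cc_sq_pos (hα1 : α ≠ 1) : 0 < 1 - cc α ^ 2 :=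
  sub_pos.2 (pow_lt_one₀ (Real.sqrt_nonneg _) (cc_lt_one hα1) two_ne_zero)

lemma cc_sub_div_cc (hα : 0 < α) : cc α - α / cc α = α * (1 - α) * cc α := by
  have := cc_pos hα
  field_simp
  linear_combination cc_sq_mul hα.le

lemma r2_sub_mul_cc (hα : 0 < α) :
    r2 α - α * cc α = α * (1 - cc α ^ 2) / (cc α + √α) := by
  have := cc_pos hα
  rw [r2]
  field_simp
  linear_combination Real.sq_sqrt hα.le

lemma div_cc_sub_r2 (hα : 0 < α) :
    α / cc α - r2 α = α * √α * (1 - cc α ^ 2) / (cc α * (cc α + √α)) := by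
  have := cc_pos hα
  rw [r2]
  field_simp
  linear_combination - cc α * Real.sq_sqrt hα.le

lemma r3_sub_mul_cc (hα : 0 < α) :
    r3 α - α * cc α = (1 - α) * cc α * (cc α + √α) / (α * cc α + √α) := by
  have := cc_pos hα
  rw [r3]
  field_simp
  linear_combination Real.sq_sqrt hα.le - cc_sq_mul hα.le

lemma r3_sub_div_cc (hα : 0 < α) :
    r3 α - α / cc α = α * (1 - α) * (1 + √α * cc α) / (α * cc α + √α) := by
  have := cc_pos hα
  rw [r3]
  field_simp
  linear_combination cc α * Real.sq_sqrt hα.le + √α * cc_sq_mul hα.le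

lemma r2_mul_r3 (hα : 0 < α) : r2 α * r3 α = α := by
  have := cc_pos hα
  rw [r2, r3]
  field_simp
  exact Real.sq_sqrt hα.le

lemma r1_neg (hα : 0 < α) : r1 α < 0 := neg_lt_zero.2 (Real.sqrt_pos.2 hα)

lemma r1_sq (hα : 0 ≤ α) : r1 α ^ 2 = α := by rw [r1, neg_sq, Real.sq_sqrt hα]

lemma mul_cc_lt_r2 (hα0 : 0 < α) (hα1 : α ≠ 1) : α * cc α < r2 α := by
  have hc := cc_pos hα0
  have := one_sub_cc_sq_pos hα1
  rw [← sub_pos, r2_sub_mul_cc hα0]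
  positivity

lemma r2_lt_div_cc (hα0 : 0 < α) (hα1 : α ≠ 1) : r2 α < α / cc α := by
  have hc := cc_pos hα0
  have := one_sub_cc_sq_pos hα1
  rw [← sub_pos, div_cc_sub_r2 hα0]
  positivity

lemma div_cc_lt_cc (hα0 : 0 < α) (hα1 : α < 1) : α / cc α < cc α := by
  have := mul_pos (mul_pos hα0 (sub_pos.2 hα1)) (cc_pos hα0)
  linarith [cc_sub_div_cc hα0]

lemma cc_lt_r3 (hα0 : 0 < α) (hα1 : α ≠ 1) : cc α < r3 α := by
  have hc := cc_pos hα0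
  have hr2 : 0 < r2 α := (mul_pos hα0 hc).trans (mul_cc_lt_r2 hα0 hα1)
  rw [eq_div_of_mul_eq hr2.ne' ((mul_comm _ _).trans (r2_mul_r3 hα0)), lt_div_comm₀ hc hr2]
  exact r2_lt_div_cc hα0 hα1

lemma r3_lt_inv_cc (hα0 : 0 < α) (hα1 : α ≠ 1) : r3 α < (cc α)⁻¹ := by
  have hc := cc_pos hα0
  have hr2 : 0 < r2 α := (mul_pos hα0 hc).trans (mul_cc_lt_r2 hα0 hα1)
  rw [eq_div_of_mul_eq hr2.ne' ((mul_comm _ _).trans (r2_mul_r3 hα0)), div_lt_iff₀ hr2,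
    inv_mul_eq_div, lt_div_iff₀ hc]
  exact mul_cc_lt_r2 hα0 hα1

lemma sub_rp_mul_sub_rm (hα : 0 ≤ α) (ζ : ℂ) :
    (ζ - rp α) * (ζ - rm α) = ζ ^ 2 - cc α * (1 + α) * ζ + α := by
  have hsqrt : ((√3 : ℝ) : ℂ) ^ 2 = 3 := by
    rw [← ofReal_pow, Real.sq_sqrt (by norm_num), ofReal_ofNat]
  have hcc : (cc α : ℂ) ^ 2 * (1 - α + α ^ 2) = α := mod_cast cc_sq_mul hα
  rw [rp, rm]
  linear_combination hcc + (cc α : ℂ) ^ 2 * (1 - (α : ℂ)) ^ 2 / 4 * hsqrt -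
    (cc α : ℂ) ^ 2 * ((√3 : ℝ) : ℂ) ^ 2 * (1 - (α : ℂ)) ^ 2 / 4 * I_sq

end Parameters

/-- The polynomial `Q = (x - r₁)² (x - r₂)² (x - r₃)² (x - r₊) (x - r₋)` in the saddle point
equation `Q = (η A - ξ B)²`. It is encoded over `ℝ` by multiplying out the two non-real factors. -/
noncomputable def branchPoly (α : ℝ) : ℝ[X] :=
  (X - C (r1 α)) ^ 2 * (X - C (r2 α)) ^ 2 * (X - C (r3 α)) ^ 2 *
    (X ^ 2 - C (cc α * (1 + α)) * X + C α)

/-- The quartic `A` multiplying `η` in the saddle point equation `Q = (η A - ξ B)²`. -/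
noncomputable def etaPoly (α : ℝ) : ℝ[X] :=
  (X - C 1) * (X + C 1) * (X - C (α * cc α)) * (X - C (α / cc α))

/-- The quartic `B` multiplying `ξ` in the saddle point equation `Q = (η A - ξ B)²`. -/
noncomputable def xiPoly (α : ℝ) : ℝ[X] :=
  (X - C α) * (X + C α) * (X - C (cc α)) * (X - C (1 / cc α))

/-- The saddle point polynomial `M = Q - (η A - ξ B)²` as a polynomial with real coefficients, so
that its real roots can be located by the intermediate value theorem. -/
noncomputable def saddlePoly (α ξ η : ℝ) : ℝ[X] :=
  branchPoly α - (etaPoly α * C η - xiPoly α * C ξ) ^ 2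

section SaddlePoly

variable {α ξ η x : ℝ}

lemma aeval_saddlePoly (hα : 0 ≤ α) (ξ η : ℝ) (ζ : ℂ) :
    aeval ζ (saddlePoly α ξ η) = Msad α ξ η ζ := by
  rw [Msad, mul_assoc _ (ζ - rp α), sub_rp_mul_sub_rm hα]
  simp [saddlePoly, branchPoly, etaPoly, xiPoly]

lemma natDegree_saddlePoly_le (α ξ η : ℝ) : (saddlePoly α ξ η).natDegree ≤ 8 := by
  unfold saddlePoly branchPoly etaPoly xiPoly
  compute_degree

lemma eval_saddlePoly (α ξ η x : ℝ) : (saddlePoly α ξ η).eval x =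
    (branchPoly α).eval x - ((etaPoly α).eval x * η - (xiPoly α).eval x * ξ) ^ 2 := by
  simp [saddlePoly]

lemma eval_saddlePoly_nonpos (hx : (branchPoly α).IsRoot x) :
    (saddlePoly α ξ η).eval x ≤ 0 := by
  rw [eval_saddlePoly, hx, zero_sub]
  exact neg_nonpos.2 (sq_nonneg _)

lemma branchPoly_isRoot_r1 (α : ℝ) : (branchPoly α).IsRoot (r1 α) := by
  simp [branchPoly, IsRoot]

lemma branchPoly_isRoot_r2 (α : ℝ) : (branchPoly α).IsRoot (r2 α) := by
  simp [branchPoly, IsRoot]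

lemma branchPoly_isRoot_r3 (α : ℝ) : (branchPoly α).IsRoot (r3 α) := by
  simp [branchPoly, IsRoot]

lemma eval_branchPoly (α x : ℝ) : (branchPoly α).eval x =
    ((x - r1 α) * (x - r2 α) * (x - r3 α)) ^ 2 * (x ^ 2 - cc α * (1 + α) * x + α) := by
  simp [branchPoly, mul_pow]

lemma eval_branchPoly_pos (hα0 : 0 < α) (hα1 : α ≠ 1) (h1 : x ≠ r1 α) (h2 : x ≠ r2 α)
    (h3 : x ≠ r3 α) : 0 < (branchPoly α).eval x := by
  have hquad : 0 < x ^ 2 - cc α * (1 + α) * x + α := by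
    have : 0 < (cc α * (1 - α)) ^ 2 :=
      sq_pos_of_ne_zero (mul_ne_zero (cc_pos hα0).ne' (sub_ne_zero.2 hα1.symm))
    linarith [sq_nonneg (x - cc α * (1 + α) / 2), cc_sq_mul hα0.le]
  have hcubic : (x - r1 α) * (x - r2 α) * (x - r3 α) ≠ 0 :=
    mul_ne_zero (mul_ne_zero (sub_ne_zero.2 h1) (sub_ne_zero.2 h2)) (sub_ne_zero.2 h3)
  rw [eval_branchPoly]
  exact mul_pos (sq_pos_of_ne_zero hcubic) hquad

lemma eval_branchPoly_mul_cc (hα : 0 < α) :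
    (branchPoly α).eval (α * cc α) = (xiPoly α).eval (α * cc α) ^ 2 := by
  have hc := cc_pos hα
  have hcc := cc_sq_mul hα.le
  have hcubic : (α * cc α - r1 α) * (α * cc α - r2 α) * (α * cc α - r3 α) =
      α * (1 - α) * cc α * (1 - cc α ^ 2) := by
    rw [← neg_sub (r2 α), ← neg_sub (r3 α), r2_sub_mul_cc hα, r3_sub_mul_cc hα, r1]
    field_simp
    ring
  have hquad : (α * cc α) ^ 2 - cc α * (1 + α) * (α * cc α) + α = ((1 - α) * cc α) ^ 2 := by
    linear_combination -hcc
  have hxi : (xiPoly α).eval (α * cc α) = -(α * (1 - α) ^ 2 * cc α ^ 2 * (1 - cc α ^ 2)) := by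
    simp only [xiPoly, eval_mul, eval_add, eval_sub, eval_X, eval_C]
    field_simp
    linear_combination (1 - α) * (1 - cc α ^ 2) * hcc
  rw [eval_branchPoly, hcubic, hquad, hxi]
  ring

lemma eval_branchPoly_div_cc (hα : 0 < α) :
    (branchPoly α).eval (α / cc α) = (xiPoly α).eval (α / cc α) ^ 2 := by
  have hc := cc_pos hα
  have hcc := cc_sq_mul hα.le
  have hcubic : (α / cc α - r1 α) * (α / cc α - r2 α) * (α / cc α - r3 α) =
      -(α ^ 2 * (1 - α) * (1 - cc α ^ 2) * √α / cc α ^ 2) := by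
    rw [← neg_sub (r3 α), div_cc_sub_r2 hα, r3_sub_div_cc hα, r1]
    field_simp
    linear_combination (1 - α) * (1 - cc α ^ 2) ^ 2 * Real.sq_sqrt hα.le
  have hquad : (α / cc α) ^ 2 - cc α * (1 + α) * (α / cc α) + α = α * (1 - α) ^ 2 := by
    field_simp
    linear_combination -hcc
  have hxi : (xiPoly α).eval (α / cc α) = α ^ 3 * (1 - α) ^ 2 * (1 - cc α ^ 2) / cc α ^ 2 := by
    simp only [xiPoly, eval_mul, eval_add, eval_sub, eval_X, eval_C]
    rw [← neg_sub (cc α), cc_sub_div_cc hα]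
    field_simp
    ring
  rw [eval_branchPoly, hcubic, hquad, hxi]
  field_simp
  rw [Real.sq_sqrt hα.le]
  ring

lemma eval_etaPoly_div (hα : 0 < α) (hx : x ≠ 0) :
    (etaPoly α).eval (α / x) = -((α / x ^ 2) ^ 2 * (xiPoly α).eval x) := by
  have hc := cc_pos hα
  simp only [etaPoly, xiPoly, eval_mul, eval_add, eval_sub, eval_X, eval_C]
  field_simp
  ring

lemma eval_xiPoly_div (hα : 0 < α) (hx : x ≠ 0) :
    (xiPoly α).eval (α / x) = -((α / x ^ 2) ^ 2 * (etaPoly α).eval x) := by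
  have hc := cc_pos hα
  simp only [etaPoly, xiPoly, eval_mul, eval_add, eval_sub, eval_X, eval_C]
  field_simp
  ring

lemma eval_branchPoly_div (hα : 0 < α) (hx : x ≠ 0) :
    (branchPoly α).eval (α / x) = (α / x ^ 2) ^ 4 * (branchPoly α).eval x := by
  have hr1 : (α / x - r1 α) ^ 2 = α / x ^ 2 * (x - r1 α) ^ 2 := by
    field_simp
    linear_combination (x ^ 2 - α) * r1_sq hα.le
  have hr23 : (α / x - r2 α) * (α / x - r3 α) = α / x ^ 2 * ((x - r2 α) * (x - r3 α)) := by
    field_simp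
    linear_combination (x ^ 2 - α) * r2_mul_r3 hα
  have hquad : (α / x) ^ 2 - cc α * (1 + α) * (α / x) + α =
      α / x ^ 2 * (x ^ 2 - cc α * (1 + α) * x + α) := by
    field_simp
    ring
  rw [eval_branchPoly, eval_branchPoly, mul_assoc, mul_assoc (x - r1 α), mul_pow, hr1, hr23, hquad]
  ring

lemma eval_saddlePoly_div (hα : 0 < α) (hx : x ≠ 0) :
    (saddlePoly α ξ η).eval (α / x) = (α / x ^ 2) ^ 4 * (saddlePoly α η ξ).eval x := by
  rw [eval_saddlePoly, eval_saddlePoly, eval_branchPoly_div hα hx, eval_etaPoly_div hα hx,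
    eval_xiPoly_div hα hx]
  ring

lemma eval_saddlePoly_div_pos (hα : 0 < α) (hx : x ≠ 0) (h : 0 < (saddlePoly α η ξ).eval x) :
    0 < (saddlePoly α ξ η).eval (α / x) := by
  rw [eval_saddlePoly_div hα hx]
  positivity

lemma eval_saddlePoly_zero_pos (hα : 0 < α) (h : |η - ξ| < 1) :
    0 < (saddlePoly α ξ η).eval 0 := by
  have hbranch : (branchPoly α).eval 0 = α ^ 4 := by
    rw [eval_branchPoly]
    linear_combination α * (r2 α * r3 α) ^ 2 * r1_sq hα.le +
      α ^ 2 * (r2 α * r3 α + α) * r2_mul_r3 hα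
  have heta : (etaPoly α).eval 0 = -α ^ 2 := by
    have := cc_pos hα
    simp only [etaPoly, eval_mul, eval_add, eval_sub, eval_X, eval_C]
    field_simp
    ring
  have hxi : (xiPoly α).eval 0 = -α ^ 2 := by
    have := cc_pos hα
    simp only [xiPoly, eval_mul, eval_add, eval_sub, eval_X, eval_C]
    field_simp
    ring
  have hsq : 0 < 1 - (η - ξ) ^ 2 := sub_pos.2 ((sq_lt_one_iff_abs_lt_one _).2 h)
  calc 0 < α ^ 4 * (1 - (η - ξ) ^ 2) := by positivity
    _ = (saddlePoly α ξ η).eval 0 := by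
      rw [eval_saddlePoly, hbranch, heta, hxi]
      ring

lemma exists_lt_eval_saddlePoly_pos (hα : 0 < α) (h : |η - ξ| < 1) {r : ℝ} (hr : r < 0) :
    ∃ a < r, 0 < (saddlePoly α ξ η).eval a := by
  have hpos : ∀ᶠ y in 𝓝[<] (0 : ℝ), 0 < (saddlePoly α η ξ).eval y :=
    ((saddlePoly α η ξ).continuous.continuousAt.eventually_const_lt
      (eval_saddlePoly_zero_pos hα (by rwa [abs_sub_comm]))).filter_mono nhdsWithin_le_nhds
  obtain ⟨y, hy, hry, hy0⟩ :=
    (hpos.and (Ioo_mem_nhdsLT (div_neg_of_pos_of_neg hα hr))).exists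
  refine ⟨α / y, ?_, eval_saddlePoly_div_pos hα hy0.ne hy⟩
  rw [div_lt_iff_of_neg hr] at hry
  rwa [div_lt_iff_of_neg hy0, mul_comm]

lemma eval_saddlePoly_pos_of_isRoot_etaPoly (hξ : |ξ| < 1) (hroot : (etaPoly α).IsRoot x)
    (hsq : (branchPoly α).eval x = (xiPoly α).eval x ^ 2) (hpos : 0 < (branchPoly α).eval x) :
    0 < (saddlePoly α ξ η).eval x := by
  have hξsq : 0 < 1 - ξ ^ 2 := sub_pos.2 ((sq_lt_one_iff_abs_lt_one _).2 hξ)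
  calc 0 < (branchPoly α).eval x * (1 - ξ ^ 2) := by positivity
    _ = (saddlePoly α ξ η).eval x := by
      rw [eval_saddlePoly, hroot, hsq]
      ring

lemma eval_saddlePoly_mul_cc_pos (hα0 : 0 < α) (hα1 : α < 1) (hξ : |ξ| < 1) :
    0 < (saddlePoly α ξ η).eval (α * cc α) := by
  have hc := cc_pos hα0
  have hr1 : r1 α < α * cc α := (r1_neg hα0).trans (mul_pos hα0 hc)
  have hr3 : α * cc α < r3 α := (mul_lt_of_lt_one_left hc hα1).trans (cc_lt_r3 hα0 hα1.ne)
  exact eval_saddlePoly_pos_of_isRoot_etaPoly hξ (by simp [etaPoly, IsRoot])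
    (eval_branchPoly_mul_cc hα0)
    (eval_branchPoly_pos hα0 hα1.ne hr1.ne' (mul_cc_lt_r2 hα0 hα1.ne).ne hr3.ne)

lemma eval_saddlePoly_div_cc_pos (hα0 : 0 < α) (hα1 : α < 1) (hξ : |ξ| < 1) :
    0 < (saddlePoly α ξ η).eval (α / cc α) := by
  have hr1 : r1 α < α / cc α := (r1_neg hα0).trans (div_pos hα0 (cc_pos hα0))
  have hr3 : α / cc α < r3 α := (div_cc_lt_cc hα0 hα1).trans (cc_lt_r3 hα0 hα1.ne)
  exact eval_saddlePoly_pos_of_isRoot_etaPoly hξ (by simp [etaPoly, IsRoot])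
    (eval_branchPoly_div_cc hα0)
    (eval_branchPoly_pos hα0 hα1.ne hr1.ne' (r2_lt_div_cc hα0 hα1.ne).ne' hr3.ne)

lemma eval_saddlePoly_cc_pos (hα0 : 0 < α) (hα1 : α < 1) (hη : |η| < 1) :
    0 < (saddlePoly α ξ η).eval (cc α) := by
  have hdiv := div_pos hα0 (cc_pos hα0)
  simpa [div_div_cancel₀ hα0.ne'] using
    eval_saddlePoly_div_pos hα0 hdiv.ne' (eval_saddlePoly_div_cc_pos hα0 hα1 hη)

lemma eval_saddlePoly_inv_cc_pos (hα0 : 0 < α) (hα1 : α < 1) (hη : |η| < 1) :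
    0 < (saddlePoly α ξ η).eval (cc α)⁻¹ := by
  have hmul := mul_pos hα0 (cc_pos hα0)
  simpa [div_mul_cancel_left₀ hα0.ne'] using
    eval_saddlePoly_div_pos hα0 hmul.ne' (eval_saddlePoly_mul_cc_pos hα0 hα1 hη)

lemma six_le_card_roots_saddlePoly (hα0 : 0 < α) (hα1 : α < 1) (hξ : |ξ| < 1) (hη : |η| < 1)
    (hηξ : |η - ξ| < 1) : 6 ≤ (saddlePoly α ξ η).roots.card := by
  set P := saddlePoly α ξ η
  obtain ⟨a, ha, hPa⟩ := exists_lt_eval_saddlePoly_pos hα0 hηξ (r1_neg hα0)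
  have near_r1 : 2 ≤ P.roots.countP (· ∈ Set.Ioo a 0) :=
    two_le_countP_roots_Ioo ha (r1_neg hα0) hPa
      (eval_saddlePoly_nonpos (branchPoly_isRoot_r1 α)) (eval_saddlePoly_zero_pos hα0 hηξ)
  have near_r2 : 2 ≤ P.roots.countP (· ∈ Set.Ioo (α * cc α) (α / cc α)) :=
    two_le_countP_roots_Ioo (mul_cc_lt_r2 hα0 hα1.ne) (r2_lt_div_cc hα0 hα1.ne)
      (eval_saddlePoly_mul_cc_pos hα0 hα1 hξ) (eval_saddlePoly_nonpos (branchPoly_isRoot_r2 α))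
      (eval_saddlePoly_div_cc_pos hα0 hα1 hξ)
  have near_r3 : 2 ≤ P.roots.countP (· ∈ Set.Ioo (cc α) (cc α)⁻¹) :=
    two_le_countP_roots_Ioo (cc_lt_r3 hα0 hα1.ne) (r3_lt_inv_cc hα0 hα1.ne)
      (eval_saddlePoly_cc_pos hα0 hα1 hη) (eval_saddlePoly_nonpos (branchPoly_isRoot_r3 α))
      (eval_saddlePoly_inv_cc_pos hα0 hα1 hη)
  have h0 : 0 < α * cc α := mul_pos hα0 (cc_pos hα0)
  have h2 : α * cc α < α / cc α := (mul_cc_lt_r2 hα0 hα1.ne).trans (r2_lt_div_cc hα0 hα1.ne)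
  have h23 : α / cc α < cc α := div_cc_lt_cc hα0 hα1
  have h3 : cc α < (cc α)⁻¹ := (cc_lt_r3 hα0 hα1.ne).trans (r3_lt_inv_cc hα0 hα1.ne)
  calc 6 ≤ P.roots.countP (· ∈ Set.Ioo a 0) +
        (P.roots.countP (· ∈ Set.Ioo (α * cc α) (α / cc α)) +
          P.roots.countP (· ∈ Set.Ioo (cc α) (cc α)⁻¹)) := by lia
    _ ≤ P.roots.countP (· ∈ Set.Ioo a 0) +
        P.roots.countP (· ∈ Set.Ioo (α * cc α) (cc α)⁻¹) := by
      gcongr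
      exact countP_Ioo_add_countP_Ioo_le _ h2.le h23.le h3.le
    _ ≤ P.roots.countP (· ∈ Set.Ioo a (cc α)⁻¹) :=
      countP_Ioo_add_countP_Ioo_le _ (ha.trans (r1_neg hα0)).le h0.le
        (h2.trans (h23.trans h3)).le
    _ ≤ P.roots.card := P.roots.countP_le_card _

end SaddlePoly

/-- There is at most one solution of the saddle point equation in the open upper half-plane. -/
theorem at_most_one_saddle_in_upper_half_plane
    (α ξ η : ℝ) (hα0 : 0 < α) (hα1 : α < 1)
    (hξl : -1 < ξ) (hξr : ξ < 1) (hηl : -1 < η) (hηr : η < 1)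
    (hdl : -1 < η - ξ) (hdr : η - ξ < 1) :
    Set.Subsingleton {ζ : ℂ | 0 < ζ.im ∧ Msad α ξ η ζ = 0} := by
  have hroots : 6 ≤ (saddlePoly α ξ η).roots.card :=
    six_le_card_roots_saddlePoly hα0 hα1 (abs_lt.2 ⟨hξl, hξr⟩) (abs_lt.2 ⟨hηl, hηr⟩)
      (abs_lt.2 ⟨hdl, hdr⟩)
  have hdeg : (saddlePoly α ξ η).natDegree < (saddlePoly α ξ η).roots.card + 4 := by
    linarith [natDegree_saddlePoly_le α ξ η]
  have hne : saddlePoly α ξ η ≠ 0 := by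
    intro h
    simp [h] at hroots
  simpa only [aeval_saddlePoly hα0.le] using subsingleton_upper_roots_of_natDegree_lt hne hdeg
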